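/- arXiv:1506.08071 — 3 statements merged into one kernel-verified Lean document; each statement's English description precedes it below -/
import Mathlib

section
/- Let a and c be elements of A_n such that A_n·a + A_n·c = A_n and a*c = c*a. Then there exists an antisymmetric element s ∈ A_n^asym such that a + sc is invertible in A_n. -/
open Polynomial Matrix

noncomputable section

abbrev TruncPoly (K : Type) [CommRing K] (n : ℕ) := AdjoinRoot (X ^ n : K[X])

def trStar (K : Type) [CommRing K] (σ : K →+* K) (n : ℕ) :
    TruncPoly K n →+* TruncPoly K n :=
  AdjoinRoot.lift ((AdjoinRoot.of _).comp σ) (-(AdjoinRoot.root _)) (by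
    have h : (AdjoinRoot.root (X ^ n : K[X])) ^ n = 0 := by
      rw [← AdjoinRoot.mk_X, ← map_pow, AdjoinRoot.mk_self]
    rw [eval₂_pow, eval₂_X, neg_pow, h, mul_zero])


/-!
`A_n` is a local ring, since an element with invertible constant coefficient is a unit plus a
nilpotent. Hence one of `a`, `c` is a unit. If `a` is, take `s = 0`; otherwise `c` is, and
`s = Δ` works because `Δ` is an antisymmetric unit and `a` lies in the maximal ideal.
-/

theorem isUnit_or_isUnit_add_mul_of_isCoprime {R : Type*} [CommRing R] [IsLocalRing R]
    {a c s : R} (hac : IsCoprime a c) (hs : IsUnit s) : IsUnit a ∨ IsUnit (a + s * c) := by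
  obtain ⟨u, v, huv⟩ := hac
  have hsum : IsUnit (u * a + v * c) := huv ▸ isUnit_one
  rcases IsLocalRing.isUnit_or_isUnit_of_isUnit_add hsum with hua | hvc
  · exact .inl (isUnit_of_mul_isUnit_right hua)
  · have hc : IsUnit c := isUnit_of_mul_isUnit_right hvc
    have hdiff : IsUnit (-a + (a + s * c)) := by
      rw [neg_add_cancel_left]
      exact hs.mul hc
    exact (IsLocalRing.isUnit_or_isUnit_of_isUnit_add hdiff).imp_left (IsUnit.neg_iff a).mp

namespace TruncPoly

variable {R : Type} [CommRing R] {n : ℕ}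

theorem isNilpotent_root : IsNilpotent (AdjoinRoot.root (X ^ n : R[X])) :=
  ⟨n, by rw [← AdjoinRoot.mk_X, ← map_pow, AdjoinRoot.mk_self]⟩

theorem isUnit_mk_of_isUnit_coeff_zero {f : R[X]} (hf : IsUnit (f.coeff 0)) :
    IsUnit (AdjoinRoot.mk (X ^ n) f) := by
  have hnil : IsNilpotent (AdjoinRoot.mk (X ^ n) f.divX * AdjoinRoot.root (X ^ n)) :=
    (Commute.all _ _).isNilpotent_mul_left isNilpotent_root
  have hconst : IsUnit (AdjoinRoot.of (X ^ n) (f.coeff 0)) := hf.map _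
  rw [← divX_mul_X_add f, map_add, map_mul, AdjoinRoot.mk_X, AdjoinRoot.mk_C]
  exact hnil.isUnit_add_right_of_commute hconst (Commute.all _ _)

instance isLocalRing [IsLocalRing R] [Nontrivial (TruncPoly R n)] :
    IsLocalRing (TruncPoly R n) := by
  refine .of_isUnit_or_isUnit_one_sub_self fun y ↦ ?_
  obtain ⟨f, rfl⟩ := AdjoinRoot.mk_surjective y
  refine (IsLocalRing.isUnit_or_isUnit_one_sub_self (f.coeff 0)).imp
    isUnit_mk_of_isUnit_coeff_zero fun hf ↦ ?_
  rw [← map_one (AdjoinRoot.mk (X ^ n)), ← map_sub]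
  exact isUnit_mk_of_isUnit_coeff_zero (by rwa [coeff_sub, coeff_one_zero])

end TruncPoly

theorem trStar_of {R : Type} [CommRing R] (σ : R →+* R) (n : ℕ) (r : R) :
    trStar R σ n (AdjoinRoot.of _ r) = AdjoinRoot.of _ (σ r) :=
  AdjoinRoot.lift_of _

theorem exists_asym_add_unit_general {R : Type} [CommRing R] [IsLocalRing R] (σ : R →+* R)
    {Δ : R} (hΔ : IsUnit Δ) (hσΔ : σ Δ = -Δ) {n : ℕ} {a c : TruncPoly R n}
    (hspan : Ideal.span {a, c} = ⊤) :
    ∃ s : TruncPoly R n, trStar R σ n s = -s ∧ IsUnit (a + s * c) := by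
  cases subsingleton_or_nontrivial (TruncPoly R n)
  · exact ⟨0, Subsingleton.elim _ _, isUnit_of_subsingleton _⟩
  have hac : IsCoprime a c := Ideal.mem_span_pair.mp ((Ideal.eq_top_iff_one _).mp hspan)
  have hδ : IsUnit (AdjoinRoot.of (X ^ n) Δ) := hΔ.map _
  rcases isUnit_or_isUnit_add_mul_of_isCoprime hac hδ with ha | hadd
  · exact ⟨0, by rw [map_zero, neg_zero], by rwa [zero_mul, add_zero]⟩
  · exact ⟨AdjoinRoot.of _ Δ, by rw [trStar_of, hσΔ, map_neg], hadd⟩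

/-- if `A_n·a + A_n·c = A_n` and `a*c = c*a`, then there is an
antisymmetric `s` with `a + s·c` invertible. -/
theorem exists_asym_add_unit
    (p t q : ℕ) (hp : p.Prime) (hp2 : Odd p) (ht : 0 < t) (hq : q = p ^ t)
    (k K : Type) [Field k] [Fintype k] [Field K] [Fintype K] [Algebra k K]
    (hcardk : Fintype.card k = q) (hcardK : Fintype.card K = q ^ 2)
    (Δ : K) (hΔ : Δ ∉ Set.range (algebraMap k K))
    (hΔ2 : Δ ^ 2 ∈ Set.range (algebraMap k K))
    (σ : K →+* K) (hσk : ∀ c : k, σ (algebraMap k K c) = algebraMap k K c)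
    (hσne : σ ≠ RingHom.id K) (hσΔ : σ Δ = -Δ)
    (n : ℕ) (hn : 0 < n)
    (a c : TruncPoly K n)
    (hspan : Ideal.span {a, c} = (⊤ : Ideal (TruncPoly K n)))
    (hac : trStar K σ n a * c = trStar K σ n c * a) :
    ∃ s : TruncPoly K n, trStar K σ n s = -s ∧ IsUnit (a + s * c) := by
  have hΔ0 : Δ ≠ 0 := fun h ↦ hΔ ⟨0, by rw [map_zero, h]⟩
  exact exists_asym_add_unit_general σ hΔ0.isUnit hσΔ hspan
end
end

section
/- The group SL_*^1(2,A_n) is generated by the matrices h_t = [[t,0],[0,(t*)^{−1}]] for t ∈ A_n^×, u_s = [[1,s],[0,1]] for s ∈ A_n^asym, and w = [[0,1],[1,0]]. -/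
open Polynomial Matrix

noncomputable section

/-- The matrix `J = [[0,1],[1,0]]`. -/
def jMat (A : Type) [CommRing A] : Matrix (Fin 2) (Fin 2) A := !![0, 1; 1, 0]

/-- The involution `g ↦ g*` on 2×2 matrices: `(g*)_{ij} = (g_{ji})*`. -/
def mStar (A : Type) [CommRing A] (st : A →+* A) (g : Matrix (Fin 2) (Fin 2) A) :
    Matrix (Fin 2) (Fin 2) A := (g.map st)ᵀ

/-- The group `SL_*^1(2,A)` (as a set of matrices): `g* J g = J`. -/
def SLstarSet (A : Type) [CommRing A] (st : A →+* A) : Set (Matrix (Fin 2) (Fin 2) A) :=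
  {g | mStar A st g * jMat A * g = jMat A}

/-- The diagonal generator `h_t = [[t,0],[0,(t*)⁻¹]]`. -/
def hMat (A : Type) [CommRing A] (st : A →+* A) (u : Aˣ) : Matrix (Fin 2) (Fin 2) A :=
  !![(u : A), 0; 0, ((Units.map (st : A →* A) u)⁻¹ : Aˣ)]

/-- The unipotent generator `u_s = [[1,s],[0,1]]`. -/
def uMat (A : Type) [CommRing A] (s : A) : Matrix (Fin 2) (Fin 2) A := !![1, s; 0, 1]

/-- The Weyl element `w = [[0,1],[1,0]]`. -/
def wMat (A : Type) [CommRing A] : Matrix (Fin 2) (Fin 2) A := !![0, 1; 1, 0]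

/-- The Bruhat generators `h_t` (`t` a unit), `u_s` (`s` antisymmetric) and `w`. -/
def bruhatGens (A : Type) [CommRing A] (st : A →+* A) : Set (Matrix (Fin 2) (Fin 2) A) :=
  {m | (∃ u : Aˣ, m = hMat A st u) ∨ (∃ s : A, st s = -s ∧ m = uMat A s) ∨ m = wMat A}

/-! The ring `A_n` is local. In a matrix `!![a, b; c, d]` of `SL_*^1(2,A)` over a local ring `A`,
one of `a`, `c` is a unit because `d* a + b* c = 1`; multiplying by `w` we may assume it is `a`,
and multiplying by `h_t` with `t = a⁻¹` that `a = 1`. The defining relations then say exactly that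
`b` and `c` are antisymmetric and `d = 1 + c b`, so that the matrix equals `w u_c w u_b`. -/

section Bruhat

variable {A : Type} [CommRing A] {st : A →+* A}

theorem mStar_mul (g h : Matrix (Fin 2) (Fin 2) A) :
    mStar A st (g * h) = mStar A st h * mStar A st g := by
  rw [mStar, Matrix.map_mul, transpose_mul, mStar, mStar]

variable (st) in
/-- The set `SL_*^1(2,A)` as a submonoid of the `2 × 2` matrices, to be compared with the
`Submonoid.closure` of the Bruhat generators. -/
def SLstarSubmonoid : Submonoid (Matrix (Fin 2) (Fin 2) A) where
  carrier := SLstarSet A st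
  one_mem' := by simp [SLstarSet, mStar]
  mul_mem' {g h} (hg : mStar A st g * jMat A * g = jMat A)
      (hh : mStar A st h * jMat A * h = jMat A) :=
    calc mStar A st (g * h) * jMat A * (g * h)
      _ = mStar A st h * (mStar A st g * jMat A * g) * h := by
        simp only [mStar_mul, Matrix.mul_assoc]
      _ = jMat A := by rw [hg, hh]

theorem mem_SLstarSubmonoid_iff (a b c d : A) :
    !![a, b; c, d] ∈ SLstarSubmonoid st ↔
      st c * a + st a * c = 0 ∧ st c * b + st a * d = 1 ∧
        st d * a + st b * c = 1 ∧ st d * b + st b * d = 0 := by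
  change mStar A st _ * jMat A * _ = jMat A ↔ _
  simp [← Matrix.ext_iff, Fin.forall_fin_two, mStar, jMat, Matrix.mul_apply, and_assoc]

theorem wMat_mem_SLstarSubmonoid : wMat A ∈ SLstarSubmonoid st := by
  simp [wMat, mem_SLstarSubmonoid_iff]

theorem one_topLeft_mem_SLstarSubmonoid_iff (b c d : A) :
    !![1, b; c, d] ∈ SLstarSubmonoid st ↔ st c = -c ∧ st b = -b ∧ d = 1 + c * b := by
  rw [mem_SLstarSubmonoid_iff, map_one]
  constructor
  · rintro ⟨hc, hd, hd_star, hb⟩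
    exact ⟨by linear_combination hc,
      by linear_combination hb - b * hd_star - st b * hd + b * st b * hc,
      by linear_combination hd - b * hc⟩
  · rintro ⟨hc, hb, rfl⟩
    simp only [map_add, map_mul, map_one, hb, hc]
    exact ⟨by ring, by ring, by ring, by ring⟩

theorem uMat_mem_SLstarSubmonoid {s : A} (hs : st s = -s) : uMat A s ∈ SLstarSubmonoid st := by
  simp [uMat, one_topLeft_mem_SLstarSubmonoid_iff, hs]

theorem hMat_mem_SLstarSubmonoid (hst : Function.Involutive st) (u : Aˣ) :
    hMat A st u ∈ SLstarSubmonoid st := by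
  have h_inv : st ↑(Units.map (st : A →* A) u)⁻¹ = ↑u⁻¹ := hst _
  have h_mul_inv : st u * ↑(Units.map (st : A →* A) u)⁻¹ = 1 :=
    (Units.map (st : A →* A) u).mul_inv
  rw [hMat, mem_SLstarSubmonoid_iff, h_inv, h_mul_inv]
  simp

theorem closure_bruhatGens_le (hst : Function.Involutive st) :
    Submonoid.closure (bruhatGens A st) ≤ SLstarSubmonoid st := by
  rw [Submonoid.closure_le]
  rintro _ (⟨u, rfl⟩ | ⟨s, hs, rfl⟩ | rfl)
  · exact hMat_mem_SLstarSubmonoid hst u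
  · exact uMat_mem_SLstarSubmonoid hs
  · exact wMat_mem_SLstarSubmonoid

theorem hMat_mem_closure (u : Aˣ) : hMat A st u ∈ Submonoid.closure (bruhatGens A st) :=
  Submonoid.subset_closure (.inl ⟨u, rfl⟩)

theorem uMat_mem_closure {s : A} (hs : st s = -s) :
    uMat A s ∈ Submonoid.closure (bruhatGens A st) :=
  Submonoid.subset_closure (.inr (.inl ⟨s, hs, rfl⟩))

theorem wMat_mem_closure : wMat A ∈ Submonoid.closure (bruhatGens A st) :=
  Submonoid.subset_closure (.inr (.inr rfl))

theorem wMat_mul_self : wMat A * wMat A = 1 := by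
  simp [wMat, Matrix.one_fin_two]

theorem wMat_mul (a b c d : A) : wMat A * !![a, b; c, d] = !![c, d; a, b] := by
  simp [wMat]

theorem hMat_mul (u : Aˣ) (a b c d : A) :
    hMat A st u * !![a, b; c, d] =
      !![u * a, u * b; ↑(Units.map (st : A →* A) u)⁻¹ * c, ↑(Units.map (st : A →* A) u)⁻¹ * d] := by
  simp [hMat]

theorem hMat_mul_hMat_inv (u : Aˣ) : hMat A st u * hMat A st u⁻¹ = 1 := by
  simp [hMat, Matrix.one_fin_two, ← map_mul]

theorem wMat_mul_uMat_mul_wMat_mul_uMat (c b : A) :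
    wMat A * uMat A c * wMat A * uMat A b = !![1, b; c, 1 + c * b] := by
  simp [wMat, uMat, add_comm]

theorem one_topLeft_mem_closure {b c d : A} (hg : !![1, b; c, d] ∈ SLstarSubmonoid st) :
    !![1, b; c, d] ∈ Submonoid.closure (bruhatGens A st) := by
  obtain ⟨hc, hb, rfl⟩ := (one_topLeft_mem_SLstarSubmonoid_iff b c d).1 hg
  rw [← wMat_mul_uMat_mul_wMat_mul_uMat]
  exact mul_mem (mul_mem (mul_mem wMat_mem_closure (uMat_mem_closure hc)) wMat_mem_closure)
    (uMat_mem_closure hb)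

theorem unit_topLeft_mem_closure (hst : Function.Involutive st) (u : Aˣ) {b c d : A}
    (hg : !![↑u, b; c, d] ∈ SLstarSubmonoid st) :
    !![↑u, b; c, d] ∈ Submonoid.closure (bruhatGens A st) := by
  have h_normalized : hMat A st u⁻¹ * !![↑u, b; c, d] ∈ Submonoid.closure (bruhatGens A st) := by
    have h_mem := mul_mem (hMat_mem_SLstarSubmonoid hst u⁻¹) hg
    rw [hMat_mul, Units.inv_mul] at h_mem ⊢
    exact one_topLeft_mem_closure h_mem
  simpa only [← Matrix.mul_assoc, hMat_mul_hMat_inv, Matrix.one_mul] using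
    mul_mem (hMat_mem_closure u) h_normalized

theorem isUnit_or_isUnit_of_mem_SLstarSubmonoid [IsLocalRing A] {a b c d : A}
    (hg : !![a, b; c, d] ∈ SLstarSubmonoid st) : IsUnit a ∨ IsUnit c := by
  obtain ⟨-, -, h_sum, -⟩ := (mem_SLstarSubmonoid_iff a b c d).1 hg
  exact (IsLocalRing.isUnit_or_isUnit_of_add_one h_sum).imp
    isUnit_of_mul_isUnit_right isUnit_of_mul_isUnit_right

theorem SLstarSubmonoid_le_closure [IsLocalRing A] (hst : Function.Involutive st) :
    SLstarSubmonoid st ≤ Submonoid.closure (bruhatGens A st) := by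
  intro g hg
  rw [Matrix.eta_fin_two g] at hg ⊢
  obtain ⟨u, hu⟩ | ⟨u, hu⟩ := isUnit_or_isUnit_of_mem_SLstarSubmonoid hg
  · rw [← hu] at hg ⊢
    exact unit_topLeft_mem_closure hst u hg
  · have h_swapped : wMat A * !![g 0 0, g 0 1; g 1 0, g 1 1] ∈
        Submonoid.closure (bruhatGens A st) := by
      have h_mem := mul_mem wMat_mem_SLstarSubmonoid hg
      rw [wMat_mul, ← hu] at h_mem ⊢
      exact unit_topLeft_mem_closure hst u h_mem
    simpa only [← Matrix.mul_assoc, wMat_mul_self, Matrix.one_mul] using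
      mul_mem wMat_mem_closure h_swapped

theorem SLstar_generated_by_bruhat_general [IsLocalRing A] (hst : Function.Involutive st) :
    SLstarSet A st = ↑(Submonoid.closure (bruhatGens A st)) :=
  congrArg SetLike.coe ((SLstarSubmonoid_le_closure hst).antisymm (closure_bruhatGens_le hst))

end Bruhat

section TruncPoly

variable {K : Type} [CommRing K]

theorem trStar_involutive {σ : K →+* K} (hσ : Function.Involutive σ) (n : ℕ) :
    Function.Involutive (trStar K σ n) := by
  have h_comp : (trStar K σ n).comp (trStar K σ n) = RingHom.id _ := by
    apply AdjoinRoot.ringHom_ext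
    · ext x
      simp [trStar, hσ x]
    · simp [trStar]
  exact DFunLike.congr_fun h_comp

theorem isNilpotent_root_X_pow (n : ℕ) : IsNilpotent (AdjoinRoot.root (X ^ n : K[X])) :=
  ⟨n, by rw [← AdjoinRoot.mk_X, ← map_pow, AdjoinRoot.mk_self]⟩

/-- The constant coefficient `A_n → K`; being a local homomorphism, it transfers locality from `K`
to `A_n`. -/
def truncConstCoeff (K : Type) [CommRing K] {n : ℕ} (hn : 0 < n) : TruncPoly K n →+* K :=
  AdjoinRoot.lift (RingHom.id K) 0 (by rw [eval₂_X_pow, zero_pow hn.ne'])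

theorem isLocalHom_truncConstCoeff {n : ℕ} (hn : 0 < n) : IsLocalHom (truncConstCoeff K hn) where
  map_nonunit a ha := by
    obtain ⟨f, rfl⟩ := AdjoinRoot.mk_surjective a
    have h_coeff : IsUnit (f.coeff 0) := by
      rwa [truncConstCoeff, AdjoinRoot.lift_mk, eval₂_id, ← coeff_zero_eq_eval_zero] at ha
    rw [← f.divX_mul_X_add, map_add, map_mul, AdjoinRoot.mk_X, AdjoinRoot.mk_C]
    exact ((Commute.all _ _).isNilpotent_mul_left
      (isNilpotent_root_X_pow n)).isUnit_add_right_of_commute (h_coeff.map _) (.all _ _)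

theorem isLocalRing_truncPoly [IsLocalRing K] {n : ℕ} (hn : 0 < n) :
    IsLocalRing (TruncPoly K n) :=
  have := isLocalHom_truncConstCoeff (K := K) hn
  (truncConstCoeff K hn).domain_isLocalRing

end TruncPoly

theorem algHom_involutive_of_isQuadraticExtension {k K : Type*} [Field k] [Field K] [Algebra k K]
    [Algebra.IsQuadraticExtension k K] (φ : K →ₐ[k] K) : Function.Involutive φ := by
  let e : K ≃ₐ[k] K := .ofBijective φ (Algebra.IsAlgebraic.algHom_bijective φ)
  have h_order : orderOf e ≤ 2 :=
    orderOf_le_card_univ.trans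
      (AlgEquiv.card_le.trans_eq (Algebra.IsQuadraticExtension.finrank_eq_two k K))
  have h_sq : e ^ 2 = 1 := by
    have h_pos : 0 < orderOf e := orderOf_pos e
    rw [← orderOf_dvd_iff_pow_eq_one]
    interval_cases orderOf e <;> decide
  exact DFunLike.congr_fun h_sq

theorem isQuadraticExtension_of_card_eq_sq {k K : Type*} [Field k] [Fintype k] [Ring K] [Fintype K]
    [Algebra k K] (h : Fintype.card K = Fintype.card k ^ 2) : Algebra.IsQuadraticExtension k K where
  finrank_eq_two' :=
    Nat.pow_right_injective Fintype.one_lt_card (Module.card_eq_pow_finrank.symm.trans h)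

/-- `SL_*^1(2,A_n)` is generated by the matrices `h_t` (`t ∈ A_nˣ`),
`u_s` (`s` antisymmetric) and `w`. -/
theorem SLstar_generated_by_bruhat
    (p t q : ℕ) (hp : p.Prime) (hp2 : Odd p) (ht : 0 < t) (hq : q = p ^ t)
    (k K : Type) [Field k] [Fintype k] [Field K] [Fintype K] [Algebra k K]
    (hcardk : Fintype.card k = q) (hcardK : Fintype.card K = q ^ 2)
    (Δ : K) (hΔ : Δ ∉ Set.range (algebraMap k K))
    (hΔ2 : Δ ^ 2 ∈ Set.range (algebraMap k K))
    (σ : K →+* K) (hσk : ∀ c : k, σ (algebraMap k K c) = algebraMap k K c)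
    (hσne : σ ≠ RingHom.id K) (hσΔ : σ Δ = -Δ)
    (n : ℕ) (hn : 0 < n) :
    SLstarSet (TruncPoly K n) (trStar K σ n) =
      ↑(Submonoid.closure (bruhatGens (TruncPoly K n) (trStar K σ n))) := by
  have : Algebra.IsQuadraticExtension k K :=
    isQuadraticExtension_of_card_eq_sq (hcardk.symm ▸ hcardK)
  have : IsLocalRing (TruncPoly K n) := isLocalRing_truncPoly hn
  have hσ : Function.Involutive σ :=
    algHom_involutive_of_isQuadraticExtension (k := k) { σ with commutes' := hσk }
  exact SLstar_generated_by_bruhat_general (trStar_involutive hσ n)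
end
end

section
/- The subgroup {a ∈ A_n : a a* = 1} of A_n^× has exactly (q+1)·q^{n−1} elements. -/
open Polynomial Matrix

noncomputable section

open Function IsLocalRing

/-!
Over a local ring with an involution that moves the residue field, Hilbert's Theorem 90 says that
the elements with `a * a⋆ = 1` are exactly the quotients `u / u⋆` of units, so their number `N`
is the number of units divided by the number of fixed units. If `c - c⋆` is a unit, every ⋆-stable
ideal `I` with fixed points `I₀` decomposes as `I = I₀ ⊕ c I₀`. So if there are `r` fixed elements,
of which `s` are nonunits, the ring has `r ^ 2 - s ^ 2` units, and
`N = (r ^ 2 - s ^ 2) / (r - s) = r + s`. For `K[x] / (x ^ n)` this is `q ^ n + q ^ (n - 1)`.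
-/

section Monoid

variable {M : Type*} [Monoid M]

theorem ncard_eq_ncard_units_preimage_add {S : Set M} (hS : S.Finite) :
    S.ncard = ((↑) ⁻¹' S : Set Mˣ).ncard + (nonunits M ∩ S).ncard := by
  have hunits : S \ nonunits M = (↑) '' ((↑) ⁻¹' S : Set Mˣ) := by
    ext a
    rw [Set.image_preimage_eq_inter_range]
    exact and_congr_right fun _ ↦ not_not
  rw [← Set.ncard_image_of_injective _ Units.val_injective, ← hunits, Set.inter_comm, add_comm,
    Set.ncard_inter_add_ncard_sdiff_eq_ncard S _ hS]

end Monoid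

section Involution

variable {A : Type*} [CommRing A] {τ : A →+* A}

theorem ncard_ideal_eq_ncard_fixedPoints_sq (hτ : Involutive τ) {c : A} (hc : IsUnit (c - τ c))
    {I : Ideal A} (hI : I ≤ I.comap τ) :
    (I : Set A).ncard = ((I : Set A) ∩ fixedPoints τ).ncard ^ 2 := by
  rw [sq, ← Set.ncard_prod]
  symm
  refine Set.ncard_congr (fun w _ ↦ w.1 + c * w.2) ?_ ?_ ?_
  · rintro ⟨r, s⟩ ⟨⟨hrI, -⟩, ⟨hsI, -⟩⟩
    exact I.add_mem hrI (I.mul_mem_left c hsI)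
  · rintro ⟨r, s⟩ ⟨r', s'⟩ ⟨⟨-, hr : τ r = r⟩, ⟨-, hs : τ s = s⟩⟩
      ⟨⟨-, hr' : τ r' = r'⟩, ⟨-, hs' : τ s' = s'⟩⟩ (h : r + c * s = r' + c * s')
    have hconj : r + τ c * s = r' + τ c * s' := by
      simpa only [map_add, map_mul, hr, hs, hr', hs'] using congrArg τ h
    obtain rfl : s = s' := hc.mul_left_cancel (by linear_combination h - hconj)
    rw [add_right_cancel h]
  · intro a ha
    obtain ⟨d, hd⟩ := hc.exists_right_inv
    have hτd : τ d = -d := by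
      have hd' : (τ c - c) * τ d = 1 := by
        simpa only [map_mul, map_sub, hτ c, map_one] using congrArg τ hd
      linear_combination -d * hd' - τ d * hd
    let s := d * (a - τ a)
    have hs : τ s = s := by
      simp only [s, map_mul, map_sub, hτ a, hτd]
      ring
    have hsI : s ∈ I := I.mul_mem_left d (I.sub_mem ha (hI ha))
    have hr : τ (a - c * s) = a - c * s := by
      rw [map_sub, map_mul, hs]
      linear_combination (a - τ a) * hd
    exact ⟨(a - c * s, s), ⟨⟨I.sub_mem ha (I.mul_mem_left c hsI), hr⟩, hsI, hs⟩,
      sub_add_cancel _ _⟩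

theorem card_eq_ncard_fixedPoints_sq (hτ : Involutive τ) {c : A} (hc : IsUnit (c - τ c)) :
    Nat.card A = (fixedPoints τ).ncard ^ 2 := by
  simpa only [Submodule.top_coe, Set.univ_inter, Set.ncard_univ] using
    ncard_ideal_eq_ncard_fixedPoints_sq hτ hc (I := ⊤) le_top

/-- The homomorphism `u ↦ u / τ u`; Hilbert's Theorem 90 describes its range. -/
def unitsDivMap (τ : A →+* A) : Aˣ →* Aˣ := MonoidHom.id Aˣ / Units.map τ

theorem mem_ker_unitsDivMap {u : Aˣ} : u ∈ (unitsDivMap τ).ker ↔ τ u = u := by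
  rw [MonoidHom.mem_ker, unitsDivMap, MonoidHom.div_apply, div_eq_one, eq_comm, Units.ext_iff]
  rfl

theorem mul_map_eq_iff_eq_unitsDivMap {a : A} {u : Aˣ} :
    a * τ u = u ↔ a = unitsDivMap τ u := by
  rw [unitsDivMap, MonoidHom.div_apply, div_eq_mul_inv, Units.val_mul, Units.eq_mul_inv_iff_mul_eq]
  rfl

section LocalRing

variable [IsLocalRing A]

theorem exists_unit_mul_map_eq (hτ : Involutive τ) {c : A} (hc : IsUnit (c - τ c)) {a : A}
    (ha : a * τ a = 1) : ∃ u : Aˣ, a * τ u = u := by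
  -- Every `b + a * τ b` satisfies the equation; `b = 1` or `b = c` makes it a unit.
  suffices ∃ b, IsUnit (b + a * τ b) by
    obtain ⟨b, u, hu⟩ := this
    refine ⟨u, ?_⟩
    rw [hu, map_add, map_mul, hτ b]
    linear_combination b * ha
  by_cases h1 : IsUnit (1 + a)
  · exact ⟨1, by rwa [map_one, mul_one]⟩
  · have hsum : IsUnit ((c + a * τ c) + -(τ c * (1 + a))) := by
      convert hc using 1
      ring
    exact ⟨c, (isUnit_or_isUnit_of_isUnit_add hsum).resolve_right
      fun h ↦ h1 (isUnit_of_mul_isUnit_right ((IsUnit.neg_iff _).1 h))⟩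

theorem val_image_range_unitsDivMap (hτ : Involutive τ) {c : A} (hc : IsUnit (c - τ c)) :
    (↑) '' ((unitsDivMap τ).range : Set Aˣ) = {a : A | a * τ a = 1} := by
  ext a
  constructor
  · rintro ⟨-, ⟨u, rfl⟩, rfl⟩
    have h := mul_map_eq_iff_eq_unitsDivMap.2 (rfl : (unitsDivMap τ u : A) = _)
    have hconj : τ (unitsDivMap τ u) * u = τ u := by
      simpa only [map_mul, hτ (u : A)] using congrArg τ h
    exact u.isUnit.mul_left_cancel (by
      linear_combination (unitsDivMap τ u : A) * hconj + h)
  · intro ha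
    obtain ⟨u, hu⟩ := exists_unit_mul_map_eq hτ hc ha
    exact ⟨_, ⟨u, rfl⟩, (mul_map_eq_iff_eq_unitsDivMap.1 hu).symm⟩

theorem card_units_eq_mul (hτ : Involutive τ) {c : A} (hc : IsUnit (c - τ c)) :
    Nat.card Aˣ = {a : A | a * τ a = 1}.ncard * ((↑) ⁻¹' fixedPoints τ : Set Aˣ).ncard := by
  have hker : ((↑) ⁻¹' fixedPoints τ : Set Aˣ) = (unitsDivMap τ).ker :=
    Set.ext fun _ ↦ mem_ker_unitsDivMap.symm
  rw [← val_image_range_unitsDivMap hτ hc, Set.ncard_image_of_injective _ Units.val_injective,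
    hker, ← (unitsDivMap τ).ker.card_mul_index, Subgroup.index_ker, mul_comm]
  rfl

theorem maximalIdeal_le_comap_of_involutive (hτ : Involutive τ) :
    maximalIdeal A ≤ (maximalIdeal A).comap τ := fun a ha ↦ by
  rw [Ideal.mem_comap, mem_maximalIdeal, mem_nonunits_iff]
  exact fun h ↦ ha (hτ a ▸ h.map τ)

theorem card_maximalIdeal_eq_ncard_fixedPoints_sq (hτ : Involutive τ) {c : A}
    (hc : IsUnit (c - τ c)) :
    Nat.card (maximalIdeal A) = ((maximalIdeal A : Set A) ∩ fixedPoints τ).ncard ^ 2 :=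
  (Nat.card_coe_set_eq _).trans
    (ncard_ideal_eq_ncard_fixedPoints_sq hτ hc (maximalIdeal_le_comap_of_involutive hτ))

variable [Finite A]

theorem ncard_mul_map_eq_one (hτ : Involutive τ) {c : A} (hc : IsUnit (c - τ c)) :
    {a : A | a * τ a = 1}.ncard =
      (fixedPoints τ).ncard + ((maximalIdeal A : Set A) ∩ fixedPoints τ).ncard := by
  set N := {a : A | a * τ a = 1}.ncard
  set s := ((maximalIdeal A : Set A) ∩ fixedPoints τ).ncard
  set v := ((↑) ⁻¹' fixedPoints τ : Set Aˣ).ncard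
  have hfixed : (fixedPoints τ).ncard = v + s :=
    ncard_eq_ncard_units_preimage_add (fixedPoints τ).toFinite
  have hunits : Nat.card A = Nat.card Aˣ + Nat.card (maximalIdeal A) := by
    have h := ncard_eq_ncard_units_preimage_add (Set.finite_univ (α := A))
    rwa [Set.preimage_univ, Set.ncard_univ, Set.ncard_univ, Set.inter_univ] at h
  have hcount : (v + s) ^ 2 = N * v + s ^ 2 := by
    rw [← hfixed, ← card_eq_ncard_fixedPoints_sq hτ hc, hunits, card_units_eq_mul hτ hc,
      card_maximalIdeal_eq_ncard_fixedPoints_sq hτ hc]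
  have hv_pos : 0 < v := (Set.ncard_pos (Set.toFinite _)).2 ⟨1, map_one τ⟩
  rw [hfixed]
  exact Nat.eq_of_mul_eq_mul_right hv_pos (by linarith)

theorem ncard_mul_map_eq_one_of_card_eq_sq (hτ : Involutive τ) {c : A} (hc : IsUnit (c - τ c))
    {r s : ℕ} (hA : Nat.card A = r ^ 2) (hm : Nat.card (maximalIdeal A) = s ^ 2) :
    {a : A | a * τ a = 1}.ncard = r + s := by
  rw [card_eq_ncard_fixedPoints_sq hτ hc] at hA
  rw [card_maximalIdeal_eq_ncard_fixedPoints_sq hτ hc] at hm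
  rw [ncard_mul_map_eq_one hτ hc, Nat.pow_left_injective two_ne_zero hA,
    Nat.pow_left_injective two_ne_zero hm]

end LocalRing

end Involution

namespace TruncPoly

section CommRing

variable {K : Type} [CommRing K] {n : ℕ}

theorem trStar_of (σ : K →+* K) (z : K) :
    trStar K σ n (AdjoinRoot.of _ z) = AdjoinRoot.of _ (σ z) :=
  AdjoinRoot.lift_of _

theorem trStar_root (σ : K →+* K) :
    trStar K σ n (AdjoinRoot.root _) = -AdjoinRoot.root _ :=
  AdjoinRoot.lift_root _

theorem trStar_involutive {σ : K →+* K} (hσ : Involutive σ) : Involutive (trStar K σ n) := by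
  suffices (trStar K σ n).comp (trStar K σ n) = RingHom.id _ from DFunLike.congr_fun this
  refine AdjoinRoot.ringHom_ext (RingHom.ext fun z ↦ ?_) ?_
  · simp only [RingHom.comp_apply, trStar_of, hσ z, RingHom.id_apply]
  · simp only [RingHom.comp_apply, trStar_root, map_neg, neg_neg, RingHom.id_apply]

instance [Finite K] : Finite (TruncPoly K n) :=
  have := (monic_X_pow (R := K) n).finite_adjoinRoot
  Module.finite_of_finite K

theorem card_eq [Nontrivial K] : Nat.card (TruncPoly K n) = Nat.card K ^ n := by
  rw [Nat.card_congr (AdjoinRoot.powerBasis' (monic_X_pow n)).basis.equivFun.toEquiv, Nat.card_fun,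
    Nat.card_fin, AdjoinRoot.powerBasis'_dim, natDegree_X_pow]

/-- The augmentation `K[x] / (x ^ n) → K`, sending `x` to `0`. -/
def constCoeff (K : Type) [CommRing K] (n : ℕ) [NeZero n] : TruncPoly K n →+* K :=
  AdjoinRoot.lift (RingHom.id K) 0 (by simp [NeZero.ne n])

variable [NeZero n]

theorem constCoeff_of (z : K) : constCoeff K n (AdjoinRoot.of _ z) = z :=
  AdjoinRoot.lift_of _

theorem constCoeff_surjective : Surjective (constCoeff K n) :=
  fun z ↦ ⟨_, constCoeff_of z⟩

theorem isNilpotent_of_constCoeff_eq_zero {a : TruncPoly K n} (ha : constCoeff K n a = 0) :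
    IsNilpotent a := by
  obtain ⟨f, rfl⟩ := AdjoinRoot.mk_surjective a
  rw [constCoeff, AdjoinRoot.lift_mk, eval₂_id, ← coeff_zero_eq_eval_zero, ← X_dvd_iff] at ha
  exact ⟨n, by rw [← map_pow, AdjoinRoot.mk_eq_zero]; exact pow_dvd_pow_of_dvd ha n⟩

instance : IsLocalHom (constCoeff K n) where
  map_nonunit a ha := by
    have hnil : IsNilpotent (a - AdjoinRoot.of _ (constCoeff K n a)) :=
      isNilpotent_of_constCoeff_eq_zero (by rw [map_sub, constCoeff_of, sub_self])
    simpa only [add_sub_cancel] using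
      hnil.isUnit_add_left_of_commute (ha.map (AdjoinRoot.of _)) (Commute.all _ _)

instance [IsLocalRing K] : IsLocalRing (TruncPoly K n) :=
  (constCoeff K n).domain_isLocalRing

end CommRing

theorem card_maximalIdeal {K : Type} [Field K] [Finite K] {n : ℕ} [NeZero n] :
    Nat.card (maximalIdeal (TruncPoly K n)) = Nat.card K ^ (n - 1) := by
  let e := RingHom.quotientKerEquivOfSurjective (constCoeff_surjective (K := K) (n := n))
  have h := Submodule.card_eq_card_quotient_mul_card (RingHom.ker (constCoeff K n))
  rw [card_eq, Nat.card_congr e.toEquiv, ker_eq_maximalIdeal _ constCoeff_surjective,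
    ← mul_pow_sub_one (NeZero.ne n)] at h
  refine Nat.eq_of_mul_eq_mul_right (Nat.card_pos (α := K)) ?_
  linarith

end TruncPoly

theorem algHom_involutive {k K : Type*} [Field k] [Field K] [Algebra k K]
    [Algebra.IsQuadraticExtension k K] [IsGalois k K] (σ : K →ₐ[k] K) : Involutive σ := by
  obtain ⟨g, rfl⟩ := (Algebra.IsAlgebraic.algEquivEquivAlgHom k K).surjective σ
  have hg : g ^ 2 = 1 := by
    rw [← Algebra.IsQuadraticExtension.finrank_eq_two k K, ← IsGalois.card_aut_eq_finrank,
      pow_card_eq_one']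
  intro z
  rw [sq] at hg
  exact DFunLike.congr_fun hg z

theorem involutive_of_card_eq_sq {k K : Type*} [Field k] [Field K] [Finite K] [Algebra k K]
    (hcard : Nat.card K = Nat.card k ^ 2) {σ : K →+* K}
    (hσ : ∀ c : k, σ (algebraMap k K c) = algebraMap k K c) : Involutive σ := by
  have : Finite k := .of_injective _ (algebraMap k K).injective
  have : Algebra.IsQuadraticExtension k K := ⟨by
    rw [Module.natCard_eq_pow_finrank (K := k) (V := K)] at hcard
    exact Nat.pow_right_injective Finite.one_lt_card hcard⟩
  exact algHom_involutive { σ with commutes' := hσ }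

theorem card_norm_one_truncPoly_general {K : Type} [Field K] [Finite K] {q : ℕ}
    (hK : Nat.card K = q ^ 2) {σ : K →+* K} (hσ : Involutive σ) (hσne : σ ≠ RingHom.id K)
    {n : ℕ} (hn : 0 < n) :
    Nat.card {a : TruncPoly K n | a * trStar K σ n a = 1} = (q + 1) * q ^ (n - 1) := by
  have : NeZero n := ⟨hn.ne'⟩
  obtain ⟨z, hz⟩ : ∃ z, σ z ≠ z := by
    by_contra! h
    exact hσne (RingHom.ext h)
  have hunit : IsUnit (AdjoinRoot.of (X ^ n) z - trStar K σ n (AdjoinRoot.of _ z)) := by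
    rw [TruncPoly.trStar_of, ← map_sub]
    exact (sub_ne_zero.2 hz.symm).isUnit.map _
  have hA : Nat.card (TruncPoly K n) = (q ^ n) ^ 2 := by
    rw [TruncPoly.card_eq, hK, pow_right_comm]
  have hm : Nat.card (maximalIdeal (TruncPoly K n)) = (q ^ (n - 1)) ^ 2 := by
    rw [TruncPoly.card_maximalIdeal, hK, pow_right_comm]
  rw [Nat.card_coe_set_eq, ncard_mul_map_eq_one_of_card_eq_sq
    (TruncPoly.trStar_involutive hσ) hunit hA hm, ← mul_pow_sub_one hn.ne', add_one_mul]

/-- the subgroup `{a ∈ A_n : a·a* = 1}` has `(q+1)·q^{n−1}` elements. -/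
theorem card_norm_one_truncPoly
    (p t q : ℕ) (hp : p.Prime) (hp2 : Odd p) (ht : 0 < t) (hq : q = p ^ t)
    (k K : Type) [Field k] [Fintype k] [Field K] [Fintype K] [Algebra k K]
    (hcardk : Fintype.card k = q) (hcardK : Fintype.card K = q ^ 2)
    (Δ : K) (hΔ : Δ ∉ Set.range (algebraMap k K))
    (hΔ2 : Δ ^ 2 ∈ Set.range (algebraMap k K))
    (σ : K →+* K) (hσk : ∀ c : k, σ (algebraMap k K c) = algebraMap k K c)
    (hσne : σ ≠ RingHom.id K) (hσΔ : σ Δ = -Δ)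
    (n : ℕ) (hn : 0 < n) :
    Nat.card {a : TruncPoly K n | a * trStar K σ n a = 1} = (q + 1) * q ^ (n - 1) := by
  subst hcardk
  exact card_norm_one_truncPoly_general (by simpa using hcardK)
    (involutive_of_card_eq_sq (by simpa using hcardK) hσk) hσne hn
end
end
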